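/- Fix a positive integer k. Then ∫_1^∞ Δ_k(x)² x^{-2} dx < ∞ if and only if Σ_{n ≥ 0} ℓ_{n,k}² < ∞, and in that case ∫_1^∞ Δ_k(x)² x^{-2} dx = Σ_{n ≥ 0} ℓ_{n,k}². -/

import Mathlib

open scoped Real Topology
open Complex Filter MeasureTheory Finset Asymptotics

/-- The analytic extension of `s ↦ ((s-1) * ζ(s))^k` to `s = 1` (where its value is `1`). -/
noncomputable def zetaPowAux (k : ℕ) : ℂ → ℂ :=
  Function.update (fun s : ℂ => ((s - 1) * riemannZeta s) ^ k) 1 1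

/-- `lam k j` is the Taylor coefficient `λ_{j,k}`, i.e. the `j`-th derivative at `s = 1` of the
analytic extension of `(s-1)^k ζ(s)^k`; these numbers are real, and we record their real part. -/
noncomputable def lam (k j : ℕ) : ℝ :=
  (iteratedDeriv j (zetaPowAux k) 1).re

/-- The Fourier coefficients `ℓ_{n,k}` for `n ≥ -k` (an integer index). -/
noncomputable def ell (k : ℕ) (n : ℤ) : ℝ :=
  if 1 ≤ n then
    (-1 : ℝ) ^ n.toNat *
      ∑ j ∈ Finset.Icc 1 n.toNat,
        ((n.toNat - 1).choose (j - 1) : ℝ) * lam k (j + k) / (Nat.factorial (j + k))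
  else
    (-1 : ℝ) ^ k *
      ∑ j ∈ Finset.range ((k + n).toNat + 1),
        ((k - j).choose (-n).toNat : ℝ) * (-1 : ℝ) ^ j * lam k j / (Nat.factorial j)

/-- The Lindelöf Hypothesis: `ζ(1/2 + it) = O(|t|^ε)` for every `ε > 0`. -/
def LindelofHypothesis : Prop :=
  ∀ ε : ℝ, 0 < ε → ∃ C : ℝ, ∀ t : ℝ, 1 ≤ |t| →
    ‖riemannZeta (1 / 2 + t * Complex.I)‖ ≤ C * |t| ^ ε

/-- `dk k n` is the Piltz divisor function `d_k(n)`: the number of representations of `n` as an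
ordered product of `k` positive integers (the `k`-th Dirichlet-convolution power of `ζ`). -/
noncomputable def dk (k n : ℕ) : ℕ := (ArithmeticFunction.zeta ^ k) n

/-- The coefficients `a_{j,k}` of the polynomial `P_k`. -/
noncomputable def aCoef (k j : ℕ) : ℝ :=
  (-1 : ℝ) ^ (k - 1 - j) *
    ∑ i ∈ Finset.range (k - 1 - j + 1), (-1 : ℝ) ^ i * lam k i / (Nat.factorial i)

/-- The error term `Δ_k(x) = (Σ_{1 ≤ n ≤ x} d_k(n)) - x P_k(log x)` in the Piltz divisor
problem. -/
noncomputable def Deltak (k : ℕ) (x : ℝ) : ℝ :=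
  (∑ n ∈ Finset.Icc 1 ⌊x⌋₊, (dk k n : ℝ)) -
    x * ∑ j ∈ Finset.range k, aCoef k j / (Nat.factorial j) * (Real.log x) ^ j

/-- The `n`-th Laguerre polynomial. -/
noncomputable def laguerre (n : ℕ) (u : ℝ) : ℝ :=
  ∑ j ∈ Finset.range (n + 1), (n.choose j : ℝ) * (-1 : ℝ) ^ j * u ^ j / (Nat.factorial j)

/-- The Bessel function of the first kind of order `0`. -/
noncomputable def besselJ0 (u : ℝ) : ℝ :=
  ∑' m : ℕ, (-1 : ℝ) ^ m * (u / 2) ^ (2 * m) / ((Nat.factorial m : ℝ) ^ 2)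

/-- `φ_k(x) = ∫_1^∞ Δ_k(r) J₀(2 √(x log r)) r⁻² dr`. -/
noncomputable def phik (k : ℕ) (x : ℝ) : ℝ :=
  ∫ r in Set.Ioi (1 : ℝ), Deltak k r * besselJ0 (2 * Real.sqrt (x * Real.log r)) / r ^ 2

/-!
In `L²(1, ∞)` the functions `x ^ (-s)`, `s > 1/2`, have Gram matrix `1 / (s + t - 1)`. The sequences
`s⁻¹ (1 - s⁻¹) ^ n` have the same Gram matrix in `ℓ²`, because
`s t - (s - 1) (t - 1) = s + t - 1`. Both families are total, so there is an isometry
`U : L²(1, ∞) ≃ ℓ²` matching them, and it sends `f` to the coefficients of its Mellin transform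
`s ∫ f(x) x^(-s) dx` in powers of `1 - 1/s`. Hence `∫ f² = ∑ cₙ²` for these coefficients `cₙ`; and
if only `∑ cₙ² < ∞` is known, then `f` has the same moments as `U⁻¹ c`, hence equals it.

For `f(x) = Δ_k(x) / x` put `w = s - 1`. The Mellin transform of `∑_{n ≤ x} d_k(n)` is
`ζ(s) ^ k = w ^ (-k) ∑ λ_{j,k} w ^ j / j!`, and subtracting `x P_k(log x)` removes exactly its polar
part up to a constant. What remains is a power series in `w`, and re-expanding it in powers of
`w / (1 + w) = 1 - 1/s` gives the coefficients `(-1) ^ n ℓ_{n,k}`.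
-/

section Hilbert

open scoped InnerProductSpace

variable {𝕜 E F ι : Type*} [RCLike 𝕜] [NormedAddCommGroup E] [InnerProductSpace 𝕜 E]
  [NormedAddCommGroup F] [InnerProductSpace 𝕜 F]

theorem denseRange_linearCombination_of_forall_inner_eq_zero [CompleteSpace E] {v : ι → E}
    (hv : ∀ x, (∀ i, ⟪v i, x⟫_𝕜 = 0) → x = 0) : DenseRange (Finsupp.linearCombination 𝕜 v) := by
  rw [DenseRange, ← LinearMap.coe_range, Finsupp.range_linearCombination,
    Submodule.dense_iff_topologicalClosure_eq_top, Submodule.topologicalClosure_eq_top_iff,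
    Submodule.eq_bot_iff]
  exact fun x hx => hv x fun i =>
    (Submodule.mem_orthogonal _ _).1 hx _ (Submodule.subset_span ⟨i, rfl⟩)

theorem inner_linearCombination_linearCombination (v : ι → E) (c d : ι →₀ 𝕜) :
    ⟪Finsupp.linearCombination 𝕜 v c, Finsupp.linearCombination 𝕜 v d⟫_𝕜 =
      d.sum fun j b => b * c.sum fun i a => starRingEnd 𝕜 a * ⟪v i, v j⟫_𝕜 := by
  simp only [Finsupp.linearCombination_apply, Finsupp.sum_inner, Finsupp.inner_sum,
    inner_smul_left, inner_smul_right]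

theorem exists_linearIsometryEquiv_of_inner_eq_inner [CompleteSpace E] [CompleteSpace F]
    {v : ι → E} {w : ι → F} (hv : ∀ x, (∀ i, ⟪v i, x⟫_𝕜 = 0) → x = 0)
    (hw : ∀ y, (∀ i, ⟪w i, y⟫_𝕜 = 0) → y = 0) (h : ∀ i j, ⟪v i, v j⟫_𝕜 = ⟪w i, w j⟫_𝕜) :
    ∃ U : E ≃ₗᵢ[𝕜] F, ∀ i, U (v i) = w i := by
  have hnorm (c : ι →₀ 𝕜) :
      ‖Finsupp.linearCombination 𝕜 w (LinearEquiv.refl 𝕜 (ι →₀ 𝕜) c)‖ =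
        ‖Finsupp.linearCombination 𝕜 v c‖ := by
    rw [norm_eq_sqrt_re_inner (𝕜 := 𝕜), norm_eq_sqrt_re_inner (𝕜 := 𝕜),
      LinearEquiv.refl_apply]
    simp only [inner_linearCombination_linearCombination, h]
  refine ⟨(LinearEquiv.refl 𝕜 (ι →₀ 𝕜)).extendOfIsometry _ _
    (denseRange_linearCombination_of_forall_inner_eq_zero hv)
    (denseRange_linearCombination_of_forall_inner_eq_zero hw) hnorm, fun i => ?_⟩
  have hvi := Finsupp.linearCombination_single 𝕜 1 i (v := v)
  rw [one_smul] at hvi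
  rw [← hvi, LinearEquiv.extendOfIsometry_eq]
  simp

end Hilbert

section Uniqueness

theorem eq_zero_of_frequently_hasSum_mul_pow_zero {𝕜 : Type*} [NontriviallyNormedField 𝕜]
    [CompleteSpace 𝕜] {a : ℕ → 𝕜} (h : ∃ᶠ z in 𝓝[≠] (0 : 𝕜), HasSum (fun n => a n * z ^ n) 0) :
    a = 0 := by
  set p := FormalMultilinearSeries.ofScalars 𝕜 a
  have hp (z : 𝕜) (n : ℕ) : p n (fun _ => z) = a n * z ^ n := by
    rw [FormalMultilinearSeries.ofScalars_apply_eq, smul_eq_mul]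
  have hr : 0 < p.radius := by
    obtain ⟨z, hz, hz0⟩ := (h.and_eventually self_mem_nhdsWithin).exists
    refine (ENNReal.coe_pos.2 (nnnorm_pos.2 hz0)).trans_le
      (p.le_radius_of_tendsto (l := 0) ?_)
    simpa [p, FormalMultilinearSeries.ofScalars_norm] using hz.summable.tendsto_atTop_zero.norm
  have hsum := (p.hasFPowerSeriesOnBall hr).hasFPowerSeriesAt
  have hzero : ∃ᶠ z in 𝓝[≠] (0 : 𝕜), p.sum z = 0 :=
    h.mono fun z hz => by simpa only [FormalMultilinearSeries.sum, hp] using hz.tsum_eq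
  exact (FormalMultilinearSeries.ofScalars_series_eq_zero (E := 𝕜)).1
    (hsum.congr (hsum.analyticAt.frequently_zero_iff_eventually_zero.1 hzero)).eq_zero

theorem integrable_mul_comp_of_ae_mem_Icc {α : Type*} [MeasurableSpace α] {μ : Measure α}
    {H φ : α → ℝ} {a b : ℝ} (hH : Integrable H μ) (hφ : AEStronglyMeasurable φ μ)
    (hab : ∀ᵐ x ∂μ, φ x ∈ Set.Icc a b) {g : ℝ → ℝ} (hg : Continuous g) :
    Integrable (fun x => H x * g (φ x)) μ := by
  obtain ⟨C, hC⟩ := isCompact_Icc.exists_bound_of_continuousOn (hg.continuousOn (s := Set.Icc a b))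
  exact hH.mul_bdd (c := C) (hg.comp_aestronglyMeasurable hφ) (hab.mono fun x hx => hC _ hx)

theorem integral_mul_comp_eq_zero_of_forall_integral_mul_pow_eq_zero {α : Type*}
    [MeasurableSpace α] {μ : Measure α} {H φ : α → ℝ} {a b : ℝ} (hH : Integrable H μ)
    (hφ : AEStronglyMeasurable φ μ) (hab : ∀ᵐ x ∂μ, φ x ∈ Set.Icc a b)
    (h0 : ∀ m : ℕ, ∫ x, H x * φ x ^ m ∂μ = 0) {g : ℝ → ℝ} (hg : Continuous g) :
    ∫ x, H x * g (φ x) ∂μ = 0 := by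
  have hint {g : ℝ → ℝ} (hg : Continuous g) : Integrable (fun x => H x * g (φ x)) μ :=
    integrable_mul_comp_of_ae_mem_Icc hH hφ hab hg
  have hpoly (p : Polynomial ℝ) : ∫ x, H x * p.eval (φ x) ∂μ = 0 := by
    simp_rw [Polynomial.eval_eq_sum_range, Finset.mul_sum, mul_left_comm (H _)]
    rw [integral_finsetSum _ fun m _ => (hint (continuous_pow m)).const_mul _]
    simp only [integral_const_mul, h0, mul_zero, Finset.sum_const_zero]
  have happrox : ∀ᶠ ε in 𝓝[>] (0 : ℝ), ‖∫ x, H x * g (φ x) ∂μ‖ ≤ (∫ x, ‖H x‖ ∂μ) * ε := by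
    filter_upwards [self_mem_nhdsWithin] with ε hε
    obtain ⟨p, hp⟩ := exists_polynomial_near_of_continuousOn a b g hg.continuousOn ε hε
    rw [← sub_zero (∫ x, H x * g (φ x) ∂μ), ← hpoly p, ← integral_sub (hint hg)
      (hint p.continuous), ← integral_mul_const]
    refine norm_integral_le_of_norm_le (hH.norm.mul_const _) (hab.mono fun x hx => ?_)
    rw [← mul_sub, norm_mul, norm_sub_rev, Real.norm_eq_abs (_ - g _)]
    exact mul_le_mul_of_nonneg_left (hp _ hx).le (norm_nonneg _)
  have hlim : Tendsto (fun ε => (∫ x, ‖H x‖ ∂μ) * ε) (𝓝[>] 0) (𝓝 0) := by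
    have hid : Tendsto (fun ε : ℝ => ε) (𝓝[>] 0) (𝓝 0) := tendsto_id.mono_left nhdsWithin_le_nhds
    simpa only [mul_zero] using hid.const_mul (∫ x, ‖H x‖ ∂μ)
  exact norm_le_zero_iff.1 (ge_of_tendsto hlim happrox)

theorem continuous_comp_inv₀ {𝕜 X : Type*} [NormedField 𝕜] [TopologicalSpace X] {g : 𝕜 → X}
    (hg : Continuous g) (h : Tendsto g (Bornology.cobounded 𝕜) (𝓝 (g 0))) :
    Continuous fun y => g y⁻¹ := by
  refine continuous_iff_continuousAt.2 fun y => ?_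
  rcases eq_or_ne y 0 with rfl | hy
  · rw [continuousAt_iff_punctured_nhds, inv_zero]
    exact h.comp tendsto_inv₀_nhdsNE_zero
  · exact hg.continuousAt.comp (continuousAt_inv₀ hy)

theorem ae_eq_zero_of_forall_integral_mul_inv_pow_eq_zero {H : ℝ → ℝ}
    (hH : IntegrableOn H (Set.Ioi 1)) (h0 : ∀ m : ℕ, ∫ x in Set.Ioi (1 : ℝ), H x * x⁻¹ ^ m = 0) :
    ∀ᵐ x ∂volume.restrict (Set.Ioi (1 : ℝ)), H x = 0 := by
  rw [ae_restrict_iff' measurableSet_Ioi]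
  refine isOpen_Ioi.ae_eq_zero_of_integral_contDiff_smul_eq_zero hH.locallyIntegrableOn
    fun g hg hgc hgs => ?_
  have hvanish {x : ℝ} (hx : x ∉ Set.Ioi 1) : g x = 0 :=
    image_eq_zero_of_notMem_tsupport fun hx' => hx (hgs hx')
  have hcont : Continuous fun y => g y⁻¹ := by
    refine continuous_comp_inv₀ hg.continuous ?_
    rw [Metric.cobounded_eq_cocompact, hvanish (by norm_num)]
    exact hgc.is_zero_at_infty
  have hinv : ∀ᵐ x ∂volume.restrict (Set.Ioi (1 : ℝ)), x⁻¹ ∈ Set.Icc (0 : ℝ) 1 :=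
    (ae_restrict_mem measurableSet_Ioi).mono fun x (hx : 1 < x) =>
      ⟨inv_nonneg.2 (zero_le_one.trans hx.le), inv_le_one_of_one_le₀ hx.le⟩
  have hzero := integral_mul_comp_eq_zero_of_forall_integral_mul_pow_eq_zero hH
    (by fun_prop) hinv h0 hcont
  rw [← setIntegral_eq_integral_of_forall_compl_eq_zero (s := Set.Ioi (1 : ℝ))
    fun x hx => by rw [hvanish hx, zero_smul], ← hzero]
  simp only [smul_eq_mul, mul_comm, inv_inv]

end Uniqueness

section Isometry

/-- Lebesgue measure on `(1, ∞)`, the measure underlying the space `L²(1, ∞)`. -/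
noncomputable abbrev volumeIoiOne : Measure ℝ := volume.restrict (Set.Ioi 1)

theorem rpow_neg_mul_rpow_neg {x : ℝ} (hx : 0 < x) (s t : ℝ) :
    x ^ (-s) * x ^ (-t) = x ^ (-(s + t)) := by
  rw [← Real.rpow_add hx, neg_add]

theorem memLp_rpow_neg {s : ℝ} (hs : 1 / 2 < s) :
    MemLp (fun x : ℝ => x ^ (-s)) 2 volumeIoiOne := by
  rw [memLp_two_iff_integrable_sq (by fun_prop)]
  refine (integrableOn_Ioi_rpow_of_lt (by linarith : -(s + s) < -1) one_pos).congr_fun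
    (fun x hx => ?_) measurableSet_Ioi
  rw [sq, rpow_neg_mul_rpow_neg (zero_lt_one.trans hx)]

theorem integral_rpow_neg_mul_rpow_neg {s t : ℝ} (hst : 1 < s + t) :
    ∫ x : ℝ, x ^ (-s) * x ^ (-t) ∂volumeIoiOne = (s + t - 1)⁻¹ := by
  rw [setIntegral_congr_fun measurableSet_Ioi fun x hx =>
    rpow_neg_mul_rpow_neg (zero_lt_one.trans hx) s t,
    integral_Ioi_rpow_of_lt (by linarith) one_pos, Real.one_rpow, neg_div, ← div_neg, one_div]
  ring

theorem inner_toLp_left {α : Type*} [MeasurableSpace α] {μ : Measure α} {g : α → ℝ}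
    (hg : MemLp g 2 μ) (f : Lp ℝ 2 μ) : inner ℝ (hg.toLp g) f = ∫ x, f x * g x ∂μ := by
  rw [L2.inner_def]
  exact integral_congr_ae (hg.coeFn_toLp.mono fun x hx => by simp [hx])

/-- The function `x ↦ x ^ (-s)`, for `s > 1 / 2`, as an element of `L²(1, ∞)`: pairing with it
evaluates the Mellin transform. -/
noncomputable def rpowLp (s : Set.Ioi (1 / 2 : ℝ)) : Lp ℝ 2 volumeIoiOne :=
  (memLp_rpow_neg s.2).toLp _

theorem inner_rpowLp_rpowLp (s t : Set.Ioi (1 / 2 : ℝ)) :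
    inner ℝ (rpowLp s) (rpowLp t) = ((s : ℝ) + t - 1)⁻¹ := by
  have hs : 1 / 2 < (s : ℝ) := s.2
  have ht : 1 / 2 < (t : ℝ) := t.2
  rw [rpowLp, inner_toLp_left, ← integral_rpow_neg_mul_rpow_neg (by linarith)]
  refine integral_congr_ae ((memLp_rpow_neg t.2).coeFn_toLp.mono fun x hx => ?_)
  dsimp only
  rw [rpowLp, hx, mul_comm]

theorem ae_eq_zero_of_forall_integral_mul_rpow_neg_eq_zero {f : ℝ → ℝ} {r : ℝ}
    (hf : IntegrableOn (fun x => f x * x ^ (-r)) (Set.Ioi 1))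
    (h0 : ∀ s, r ≤ s → ∫ x in Set.Ioi (1 : ℝ), f x * x ^ (-s) = 0) : f =ᵐ[volumeIoiOne] 0 := by
  have hzero := ae_eq_zero_of_forall_integral_mul_inv_pow_eq_zero hf fun m => by
    rw [← h0 (r + m) (le_add_of_nonneg_right m.cast_nonneg)]
    refine setIntegral_congr_fun measurableSet_Ioi fun x hx => ?_
    have hx0 : (0 : ℝ) < x := zero_lt_one.trans hx
    rw [← rpow_neg_mul_rpow_neg hx0, Real.rpow_neg hx0.le m, Real.rpow_natCast, inv_pow, mul_assoc]
  filter_upwards [hzero, ae_restrict_mem measurableSet_Ioi] with x hx hx1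
  exact (mul_eq_zero.1 hx).resolve_right (Real.rpow_pos_of_pos (zero_lt_one.trans hx1) _).ne'

theorem eq_zero_of_forall_inner_rpowLp_eq_zero {f : Lp ℝ 2 volumeIoiOne}
    (hf : ∀ s, inner ℝ (rpowLp s) f = 0) : f = 0 := by
  refine (Lp.eq_zero_iff_ae_eq_zero).2
    (ae_eq_zero_of_forall_integral_mul_rpow_neg_eq_zero (r := 1)
      ((Lp.memLp f).integrable_mul (memLp_rpow_neg one_half_lt_one)) fun s hs => ?_)
  rw [← hf ⟨s, one_half_lt_one.trans_le hs⟩, rpowLp, inner_toLp_left]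

theorem abs_one_sub_inv_lt_one {s : ℝ} (hs : 1 / 2 < s) : |1 - s⁻¹| < 1 := by
  have hs0 : 0 < s := one_half_pos.trans hs
  have h2 : s⁻¹ < 2 := inv_lt_of_inv_lt₀ two_pos (by rwa [← one_div])
  rw [abs_lt]
  constructor <;> linarith [inv_pos.2 hs0]

theorem memℓp_two_mul_geometric (c : ℝ) {r : ℝ} (hr : |r| < 1) :
    Memℓp (fun n : ℕ => c * r ^ n) 2 := by
  refine memℓp_gen ?_
  have hr2 : r ^ 2 < 1 := (sq_lt_one_iff_abs_lt_one r).2 hr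
  convert! (summable_geometric_of_lt_one (sq_nonneg r) hr2).mul_left (c ^ 2) using 2 with n
  simp only [Real.norm_eq_abs, ENNReal.toReal_ofNat, Real.rpow_ofNat, sq_abs]
  ring

/-- The sequence `s⁻¹ (1 - s⁻¹) ^ n`, for `s > 1 / 2`, as an element of `ℓ²`; the factor `s⁻¹`
makes its Gram matrix equal to that of `rpowLp`. -/
noncomputable def geomLp (s : Set.Ioi (1 / 2 : ℝ)) : lp (fun _ : ℕ => ℝ) 2 :=
  ⟨fun n => (s : ℝ)⁻¹ * (1 - (s : ℝ)⁻¹) ^ n,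
    memℓp_two_mul_geometric _ (abs_one_sub_inv_lt_one s.2)⟩

theorem hasSum_geomLp_mul (s : Set.Ioi (1 / 2 : ℝ)) (y : lp (fun _ : ℕ => ℝ) 2) :
    HasSum (fun n => y n * (1 - (s : ℝ)⁻¹) ^ n) (s * inner ℝ (geomLp s) y) := by
  have hs : (s : ℝ) ≠ 0 := (one_half_pos.trans s.2).ne'
  convert! (lp.hasSum_inner (𝕜 := ℝ) (geomLp s) y).mul_left (s : ℝ) using 2 with n
  rw [geomLp, real_inner_comm, RCLike.inner_apply, conj_trivial]
  field_simp

theorem inner_geomLp_geomLp (s t : Set.Ioi (1 / 2 : ℝ)) :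
    inner ℝ (geomLp s) (geomLp t) = ((s : ℝ) + t - 1)⁻¹ := by
  have hs : 1 / 2 < (s : ℝ) := s.2
  have ht : 1 / 2 < (t : ℝ) := t.2
  have hst : |(1 - (t : ℝ)⁻¹) * (1 - (s : ℝ)⁻¹)| < 1 := by
    rw [abs_mul]
    exact mul_lt_one_of_nonneg_of_lt_one_left (abs_nonneg _) (abs_one_sub_inv_lt_one ht)
      (abs_one_sub_inv_lt_one hs).le
  have hgeom : HasSum (fun n => geomLp t n * (1 - (s : ℝ)⁻¹) ^ n)
      ((t : ℝ)⁻¹ * (1 - (1 - (t : ℝ)⁻¹) * (1 - (s : ℝ)⁻¹))⁻¹) := by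
    convert! (hasSum_geometric_of_abs_lt_one hst).mul_left (t : ℝ)⁻¹ using 2 with n
    rw [geomLp, mul_pow, mul_assoc]
  have hs0 : (s : ℝ) ≠ 0 := by linarith
  have ht0 : (t : ℝ) ≠ 0 := by linarith
  rw [← mul_right_inj' hs0, (hasSum_geomLp_mul s (geomLp t)).unique hgeom]
  have hst0 : (s : ℝ) + t - 1 ≠ 0 := by linarith
  have hdet : 1 - (1 - (t : ℝ)⁻¹) * (1 - (s : ℝ)⁻¹) =
      ((s : ℝ) + t - 1) * ((t : ℝ)⁻¹ * (s : ℝ)⁻¹) := by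
    field_simp
    ring
  rw [hdet]
  field_simp

theorem eq_zero_of_forall_hasSum_mul_one_sub_inv_pow_zero {a : ℕ → ℝ}
    (h : ∀ s : ℝ, 1 < s → HasSum (fun n => a n * (1 - s⁻¹) ^ n) 0) : a = 0 := by
  have hright : ∀ᶠ z in 𝓝[>] (0 : ℝ), HasSum (fun n => a n * z ^ n) 0 := by
    filter_upwards [Ioo_mem_nhdsGT one_pos] with z hz
    simpa only [inv_inv, sub_sub_cancel] using
      h (1 - z)⁻¹ ((one_lt_inv₀ (sub_pos.2 hz.2)).2 (sub_lt_self 1 hz.1))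
  exact eq_zero_of_frequently_hasSum_mul_pow_zero
    (hright.frequently.filter_mono (nhdsWithin_mono _ fun z hz => (Set.mem_Ioi.1 hz).ne'))

theorem eq_zero_of_forall_inner_geomLp_eq_zero {y : lp (fun _ : ℕ => ℝ) 2}
    (hy : ∀ s, inner ℝ (geomLp s) y = 0) : y = 0 := by
  refine lp.ext (eq_zero_of_forall_hasSum_mul_one_sub_inv_pow_zero fun s hs => ?_)
  have hsum := hasSum_geomLp_mul ⟨s, one_half_lt_one.trans hs⟩ y
  rwa [hy, mul_zero] at hsum

theorem exists_linearIsometryEquiv_hasSum_mul_one_sub_inv_pow :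
    ∃ U : Lp ℝ 2 volumeIoiOne ≃ₗᵢ[ℝ] lp (fun _ : ℕ => ℝ) 2, ∀ f, ∀ s : ℝ, 1 / 2 < s →
      HasSum (fun n => U f n * (1 - s⁻¹) ^ n) (s * ∫ x in Set.Ioi (1 : ℝ), f x * x ^ (-s)) := by
  obtain ⟨U, hU⟩ := exists_linearIsometryEquiv_of_inner_eq_inner (𝕜 := ℝ)
    (fun _ => eq_zero_of_forall_inner_rpowLp_eq_zero)
    (fun _ => eq_zero_of_forall_inner_geomLp_eq_zero)
    fun s t => (inner_rpowLp_rpowLp s t).trans (inner_geomLp_geomLp s t).symm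
  refine ⟨U, fun f s hs => ?_⟩
  have hsum := hasSum_geomLp_mul ⟨s, hs⟩ (U f)
  rwa [← hU, U.inner_map_map, rpowLp, inner_toLp_left] at hsum

end Isometry

section Parseval

theorem hasSum_sq_lp {ι : Type*} (y : lp (fun _ : ι => ℝ) 2) :
    HasSum (fun i => y i ^ 2) (‖y‖ ^ 2) := by
  simpa using lp.hasSum_norm (p := 2) (by norm_num) y

theorem norm_toLp_sq {α : Type*} [MeasurableSpace α] {μ : Measure α} {f : α → ℝ}
    (hf : MemLp f 2 μ) : ‖hf.toLp f‖ ^ 2 = ∫ x, f x ^ 2 ∂μ := by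
  rw [← real_inner_self_eq_norm_sq, inner_toLp_left]
  exact integral_congr_ae (hf.coeFn_toLp.mono fun x hx => by simp only [hx, sq])

theorem integral_toLp_mul {α : Type*} [MeasurableSpace α] {μ : Measure α} {f g : α → ℝ}
    (hf : MemLp f 2 μ) : ∫ x, hf.toLp f x * g x ∂μ = ∫ x, f x * g x ∂μ :=
  integral_congr_ae (hf.coeFn_toLp.mul ae_eq_rfl)

variable {f : ℝ → ℝ} {c : ℕ → ℝ}

theorem hasSum_sq_of_forall_hasSum_mul_one_sub_inv_pow (hf : MemLp f 2 volumeIoiOne)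
    (hc : ∀ s : ℝ, 1 < s → HasSum (fun n => c n * (1 - s⁻¹) ^ n)
      (s * ∫ x in Set.Ioi (1 : ℝ), f x * x ^ (-s))) :
    HasSum (fun n => c n ^ 2) (∫ x in Set.Ioi (1 : ℝ), f x ^ 2) := by
  obtain ⟨U, hU⟩ := exists_linearIsometryEquiv_hasSum_mul_one_sub_inv_pow
  have hcoeff : (fun n => U (hf.toLp f) n - c n) = 0 := by
    refine eq_zero_of_forall_hasSum_mul_one_sub_inv_pow_zero fun s hs => ?_
    have hsub := (hU (hf.toLp f) s (one_half_lt_one.trans hs)).sub (hc s hs)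
    rw [integral_toLp_mul, sub_self] at hsub
    simpa only [sub_mul] using hsub
  have hUc : ⇑(U (hf.toLp f)) = c := sub_eq_zero.1 hcoeff
  simpa only [hUc, U.norm_map, norm_toLp_sq] using hasSum_sq_lp (U (hf.toLp f))

theorem memLp_of_forall_hasSum_mul_one_sub_inv_pow
    (hf : ∀ s : ℝ, 1 < s → IntegrableOn (fun x => f x * x ^ (-s)) (Set.Ioi 1))
    (hc : ∀ s : ℝ, 1 < s → HasSum (fun n => c n * (1 - s⁻¹) ^ n)
      (s * ∫ x in Set.Ioi (1 : ℝ), f x * x ^ (-s)))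
    (h : Summable fun n => c n ^ 2) : MemLp f 2 volumeIoiOne := by
  obtain ⟨U, hU⟩ := exists_linearIsometryEquiv_hasSum_mul_one_sub_inv_pow
  have hmem : Memℓp c 2 := memℓp_gen (by simpa using h)
  set g := U.symm ⟨c, hmem⟩
  have hUg : ⇑(U g) = c := by rw [U.apply_symm_apply]
  have hg {s : ℝ} (hs : 1 < s) : IntegrableOn (fun x => g x * x ^ (-s)) (Set.Ioi 1) :=
    (Lp.memLp g).integrable_mul (memLp_rpow_neg (one_half_lt_one.trans hs))
  have hfg {s : ℝ} (hs : 1 < s) :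
      ∫ x in Set.Ioi (1 : ℝ), f x * x ^ (-s) = ∫ x in Set.Ioi (1 : ℝ), g x * x ^ (-s) := by
    have hgs := hU g s (one_half_lt_one.trans hs)
    rw [hUg] at hgs
    exact mul_left_cancel₀ (zero_lt_one.trans hs).ne' ((hc s hs).unique hgs)
  have hzero : (fun x => f x - g x) =ᵐ[volumeIoiOne] 0 := by
    refine ae_eq_zero_of_forall_integral_mul_rpow_neg_eq_zero (r := 2) ?_ fun s hs => ?_
    · simp_rw [sub_mul]
      exact (hf 2 one_lt_two).sub (hg one_lt_two)
    · have hs1 : 1 < s := one_lt_two.trans_le hs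
      simp_rw [sub_mul]
      rw [integral_sub (hf s hs1) (hg hs1), hfg hs1, sub_self]
  exact (Lp.memLp g).ae_eq (hzero.mono fun x hx => (sub_eq_zero.1 hx).symm)

end Parseval

section LogIntegrals

theorem image_exp_Ioi_zero : Real.exp '' Set.Ioi 0 = Set.Ioi 1 := by
  rw [Real.image_exp_Ioi, Real.exp_zero]

theorem abs_exp_smul_log_pow_mul_rpow_neg (j : ℕ) (s u : ℝ) :
    |Real.exp u| • (Real.log (Real.exp u) ^ j * Real.exp u ^ (-s)) =
      u ^ j * Real.exp (-((s - 1) * u)) := by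
  rw [Real.log_exp, abs_of_pos (Real.exp_pos u), ← Real.exp_mul, smul_eq_mul, mul_left_comm,
    ← Real.exp_add]
  congr 2
  ring

theorem integrableOn_log_pow_mul_rpow_neg (j : ℕ) {s : ℝ} (hs : 1 < s) :
    IntegrableOn (fun x : ℝ => Real.log x ^ j * x ^ (-s)) (Set.Ioi 1) := by
  rw [← image_exp_Ioi_zero, integrableOn_image_iff_integrableOn_abs_deriv_smul
    measurableSet_Ioi (fun x _ => (Real.hasDerivAt_exp x).hasDerivWithinAt)
    Real.exp_injective.injOn]
  simp_rw [abs_exp_smul_log_pow_mul_rpow_neg]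
  simpa [-neg_mul, ← neg_mul] using integrableOn_rpow_mul_exp_neg_mul_rpow (s := j)
    (neg_one_lt_zero.trans_le j.cast_nonneg) one_pos (sub_pos.2 hs)

theorem integral_log_pow_mul_rpow_neg (j : ℕ) {s : ℝ} (hs : 1 < s) :
    ∫ x in Set.Ioi (1 : ℝ), Real.log x ^ j * x ^ (-s) = j.factorial / (s - 1) ^ (j + 1) := by
  have hgamma := Real.integral_rpow_mul_exp_neg_mul_Ioi (Nat.cast_add_one_pos (α := ℝ) j)
    (sub_pos.2 hs)
  rw [← image_exp_Ioi_zero, integral_image_eq_integral_abs_deriv_smul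
    measurableSet_Ioi (fun x _ => (Real.hasDerivAt_exp x).hasDerivWithinAt)
    Real.exp_injective.injOn]
  simp_rw [abs_exp_smul_log_pow_mul_rpow_neg]
  simp_rw [add_sub_cancel_right, Real.rpow_natCast, ← Nat.cast_add_one (R := ℝ)] at hgamma
  rw [hgamma, Nat.cast_add_one, Real.Gamma_nat_eq_factorial, ← Nat.cast_add_one,
    Real.rpow_natCast, one_div, inv_pow, inv_mul_eq_div]

theorem integrableOn_sum_log_pow_mul_rpow_neg (N : ℕ) (c : ℕ → ℝ) {s : ℝ} (hs : 1 < s) :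
    IntegrableOn (fun x : ℝ => (∑ j ∈ range N, c j * Real.log x ^ j) * x ^ (-s)) (Set.Ioi 1) := by
  simp_rw [Finset.sum_mul, mul_assoc]
  exact integrable_finsetSum _ fun j _ => (integrableOn_log_pow_mul_rpow_neg j hs).const_mul _

theorem integral_sum_log_pow_mul_rpow_neg (N : ℕ) (c : ℕ → ℝ) {s : ℝ} (hs : 1 < s) :
    ∫ x in Set.Ioi (1 : ℝ), (∑ j ∈ range N, c j * Real.log x ^ j) * x ^ (-s) =
      ∑ j ∈ range N, c j * (j.factorial / (s - 1) ^ (j + 1)) := by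
  simp_rw [Finset.sum_mul, mul_assoc]
  rw [integral_finsetSum _ fun j _ => (integrableOn_log_pow_mul_rpow_neg j hs).const_mul _]
  simp_rw [integral_const_mul, integral_log_pow_mul_rpow_neg _ hs]

end LogIntegrals

section DirichletSeries

theorem LSeriesSummable_pow {f : ArithmeticFunction ℂ} {s : ℂ}
    (hf : LSeriesSummable (fun n => f n) s) (k : ℕ) : LSeriesSummable (fun n => (f ^ k) n) s := by
  induction k with
  | zero =>
    refine summable_of_ne_finset_zero (s := {1}) fun n hn => ?_
    rw [pow_zero, ArithmeticFunction.one_eq_delta, LSeries.term_delta,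
      if_neg (Finset.notMem_singleton.1 hn)]
  | succ k ih =>
    rw [pow_succ]
    exact ArithmeticFunction.LSeriesSummable_mul ih hf

theorem LSeries_pow {f : ArithmeticFunction ℂ} {s : ℂ} (hf : LSeriesSummable (fun n => f n) s)
    (k : ℕ) : LSeries (fun n => (f ^ k) n) s = LSeries (fun n => f n) s ^ k := by
  induction k with
  | zero => rw [pow_zero, pow_zero, ArithmeticFunction.one_eq_delta, LSeries_delta, Pi.one_apply]
  | succ k ih =>
    rw [pow_succ, pow_succ, ArithmeticFunction.LSeries_mul' (LSeriesSummable_pow hf k) hf, ih]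

theorem sum_norm_le_tsum_norm_term_mul_rpow {f : ℕ → ℂ} {r : ℝ} (hr : 0 ≤ r)
    (hf : LSeriesSummable f r) (N : ℕ) :
    ∑ n ∈ Icc 1 N, ‖f n‖ ≤ (∑' n, ‖LSeries.term f r n‖) * (N : ℝ) ^ r := by
  refine le_trans ?_ (mul_le_mul_of_nonneg_right
    (hf.norm.sum_le_tsum (Icc 1 N) fun _ _ => norm_nonneg _) (by positivity))
  rw [Finset.sum_mul]
  refine Finset.sum_le_sum fun n hn => ?_
  obtain ⟨hn1, hnN⟩ := Finset.mem_Icc.1 hn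
  have : (0 : ℝ) < n := by exact_mod_cast hn1
  rw [LSeries.norm_term_eq, if_neg (by omega), Complex.ofReal_re,
    div_mul_eq_mul_div, le_div_iff₀ (by positivity)]
  gcongr

theorem measurable_sum_Icc_floor (f : ℕ → ℝ) :
    Measurable fun x : ℝ => ∑ n ∈ Icc 1 ⌊x⌋₊, f n :=
  (measurable_from_nat (f := fun N => ∑ n ∈ Icc 1 N, f n)).comp Nat.measurable_floor

theorem integrableOn_sum_Icc_floor_mul_rpow {f : ℕ → ℝ} {r s : ℝ} (hr : 0 ≤ r) (hrs : r < s)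
    (hf : LSeriesSummable (fun n => (f n : ℂ)) r) :
    IntegrableOn (fun x : ℝ => (∑ n ∈ Icc 1 ⌊x⌋₊, f n) * x ^ (-(s + 1))) (Set.Ioi 1) := by
  set C := ∑' n, ‖LSeries.term (fun n => (f n : ℂ)) r n‖
  have : 0 ≤ C := tsum_nonneg fun _ => norm_nonneg _
  have hint : IntegrableOn (fun x : ℝ => C * x ^ (r - (s + 1))) (Set.Ioi 1) :=
    (integrableOn_Ioi_rpow_of_lt (by linarith) one_pos).const_mul C
  refine hint.mono' ((measurable_sum_Icc_floor f).mul (by fun_prop)).aestronglyMeasurable ?_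
  filter_upwards [ae_restrict_mem measurableSet_Ioi] with x hx
  have hx0 : (0 : ℝ) < x := zero_lt_one.trans hx
  have hbound : ‖∑ n ∈ Icc 1 ⌊x⌋₊, f n‖ ≤ C * x ^ r :=
    calc ‖∑ n ∈ Icc 1 ⌊x⌋₊, f n‖ ≤ ∑ n ∈ Icc 1 ⌊x⌋₊, ‖(f n : ℂ)‖ := by
          simpa only [Complex.norm_real] using norm_sum_le _ _
      _ ≤ C * (⌊x⌋₊ : ℝ) ^ r := sum_norm_le_tsum_norm_term_mul_rpow hr hf _
      _ ≤ C * x ^ r := by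
          gcongr
          exact Nat.floor_le hx0.le
  rw [norm_mul, Real.norm_of_nonneg (Real.rpow_nonneg hx0.le _), sub_eq_add_neg,
    Real.rpow_add hx0, ← mul_assoc]
  gcongr

theorem LSeries_eq_ofReal_mul_integral {f : ℕ → ℝ} {r s : ℝ} (hr : 0 ≤ r) (hrs : r < s)
    (hf : LSeriesSummable (fun n => (f n : ℂ)) r) :
    LSeries (fun n => (f n : ℂ)) s =
      (s * ∫ x in Set.Ioi (1 : ℝ), (∑ n ∈ Icc 1 ⌊x⌋₊, f n) * x ^ (-(s + 1)) : ℝ) := by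
  have hbigO : (fun N : ℕ => ∑ n ∈ Icc 1 N, ‖(f n : ℂ)‖) =O[atTop] fun N => (N : ℝ) ^ r :=
    isBigO_of_le' _ fun N => by
      rw [Real.norm_of_nonneg (by positivity), Real.norm_of_nonneg (by positivity)]
      exact sum_norm_le_tsum_norm_term_mul_rpow hr hf N
  rw [LSeries_eq_mul_integral' _ hr (by rwa [Complex.ofReal_re]) hbigO, Complex.ofReal_mul,
    ← integral_complex_ofReal]
  congr 1
  refine setIntegral_congr_fun measurableSet_Ioi fun x hx => ?_
  have hx0 : (0 : ℝ) ≤ x := zero_le_one.trans (Set.mem_Ioi.1 hx).le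
  push_cast [Complex.ofReal_cpow hx0]
  rfl

theorem natCoe_pow {R : Type*} [Semiring R] (f : ArithmeticFunction ℕ) (k : ℕ) :
    ((f ^ k : ArithmeticFunction ℕ) : ArithmeticFunction R) = (f : ArithmeticFunction R) ^ k := by
  induction k with
  | zero => rw [pow_zero, pow_zero, ArithmeticFunction.natCoe_one]
  | succ k ih => rw [pow_succ, pow_succ, ArithmeticFunction.natCoe_mul, ih]

theorem ofReal_dk (k n : ℕ) :
    ((dk k n : ℝ) : ℂ) = ((ArithmeticFunction.zeta : ArithmeticFunction ℂ) ^ k) n := by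
  rw [Complex.ofReal_natCast, dk, ← ArithmeticFunction.natCoe_apply, natCoe_pow]

theorem LSeriesSummable_coe_zeta {s : ℂ} (hs : 1 < s.re) :
    LSeriesSummable (fun n => (ArithmeticFunction.zeta : ArithmeticFunction ℂ) n) s := by
  simpa only [ArithmeticFunction.natCoe_apply] using
    ArithmeticFunction.LSeriesSummable_zeta_iff.2 hs

theorem LSeriesSummable_dk (k : ℕ) {s : ℂ} (hs : 1 < s.re) :
    LSeriesSummable (fun n => ((dk k n : ℝ) : ℂ)) s := by
  simpa only [ofReal_dk] using LSeriesSummable_pow (LSeriesSummable_coe_zeta hs) k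

theorem LSeries_dk (k : ℕ) {s : ℂ} (hs : 1 < s.re) :
    LSeries (fun n => ((dk k n : ℝ) : ℂ)) s = riemannZeta s ^ k := by
  simp only [ofReal_dk, LSeries_pow (LSeriesSummable_coe_zeta hs),
    ArithmeticFunction.natCoe_apply, ArithmeticFunction.LSeries_zeta_eq_riemannZeta hs]

theorem integrableOn_sum_dk_mul_rpow (k : ℕ) {s : ℝ} (hs : 1 < s) :
    IntegrableOn (fun x : ℝ => (∑ n ∈ Icc 1 ⌊x⌋₊, (dk k n : ℝ)) * x ^ (-(s + 1)))
      (Set.Ioi 1) := by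
  obtain ⟨r, hr, hrs⟩ := exists_between hs
  exact integrableOn_sum_Icc_floor_mul_rpow (zero_le_one.trans hr.le) hrs
    (LSeriesSummable_dk k (by rwa [Complex.ofReal_re]))

theorem mul_integral_sum_dk_mul_rpow (k : ℕ) {s : ℝ} (hs : 1 < s) :
    s * ∫ x in Set.Ioi (1 : ℝ), (∑ n ∈ Icc 1 ⌊x⌋₊, (dk k n : ℝ)) * x ^ (-(s + 1)) =
      (riemannZeta s ^ k).re := by
  obtain ⟨r, hr, hrs⟩ := exists_between hs
  rw [← LSeries_dk k (by rwa [Complex.ofReal_re]), LSeries_eq_ofReal_mul_integral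
    (zero_le_one.trans hr.le) hrs (LSeriesSummable_dk k (by rwa [Complex.ofReal_re])),
    Complex.ofReal_re]

end DirichletSeries

section ZetaTaylor

theorem differentiableAt_zetaPowAux_of_ne (k : ℕ) {s : ℂ} (hs : s ≠ 1) :
    DifferentiableAt ℂ (zetaPowAux k) s := by
  have hpow : DifferentiableAt ℂ (fun s : ℂ => ((s - 1) * riemannZeta s) ^ k) s :=
    ((differentiableAt_id.sub_const 1).mul (differentiableAt_riemannZeta hs)).pow k
  refine hpow.congr_of_eventuallyEq ?_
  filter_upwards [isOpen_ne.mem_nhds hs] with t ht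
  rw [zetaPowAux, Function.update_of_ne ht]

theorem differentiable_zetaPowAux (k : ℕ) : Differentiable ℂ (zetaPowAux k) := by
  intro s
  rcases eq_or_ne s 1 with rfl | hs
  · refine (analyticAt_of_differentiable_on_punctured_nhds_of_continuousAt ?_ ?_).differentiableAt
    · filter_upwards [self_mem_nhdsWithin] with z hz
      exact differentiableAt_zetaPowAux_of_ne k hz
    · rw [zetaPowAux, continuousAt_update_same]
      simpa only [one_pow] using riemannZeta_residue_one.pow k
  · exact differentiableAt_zetaPowAux_of_ne k hs

theorem hasSum_lam_mul_pow (k : ℕ) {s : ℝ} (hs : s ≠ 1) :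
    HasSum (fun j => lam k j / j.factorial * (s - 1) ^ j)
      ((s - 1) ^ k * (riemannZeta s ^ k).re) := by
  have hpow (j : ℕ) : ((s : ℂ) - 1) ^ j = ((s - 1) ^ j : ℝ) := by push_cast; rfl
  have hfact (j : ℕ) : (j.factorial : ℂ)⁻¹ = ((j.factorial : ℝ)⁻¹ : ℝ) := by push_cast; rfl
  convert! Complex.hasSum_re
    (Complex.hasSum_taylorSeries_of_entire (differentiable_zetaPowAux k) 1 (s : ℂ)) using 1
  · funext j
    rw [lam, smul_eq_mul, smul_eq_mul, hpow, hfact, Complex.re_ofReal_mul, Complex.re_ofReal_mul]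
    ring
  · rw [zetaPowAux, Function.update_of_ne (by exact_mod_cast hs), mul_pow, hpow,
      Complex.re_ofReal_mul]

end ZetaTaylor

section Reexpansion

theorem hasSum_choose_mul_pow (j : ℕ) {z : ℝ} (hz : |z| < 1) :
    HasSum (fun n : ℕ => (n.choose j : ℝ) * z ^ (n + 1)) ((z / (1 - z)) ^ (j + 1)) := by
  rw [← hasSum_nat_add_iff' j, Finset.sum_eq_zero fun i hi => by
    rw [Nat.choose_eq_zero_of_lt (mem_range.1 hi), Nat.cast_zero, zero_mul], sub_zero]
  convert! (hasSum_choose_mul_geometric_of_norm_lt_one j hz).mul_left (z ^ (j + 1)) using 1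
  · funext n
    ring
  · rw [div_pow, mul_one_div]

variable {r : ℕ → ℝ} {z : ℝ}

theorem summable_mul_choose_mul_pow (hz0 : 0 ≤ z) (hz1 : z < 1)
    (hr : Summable fun j => r j * (z / (1 - z)) ^ (j + 1)) :
    Summable fun p : ℕ × ℕ => r p.1 * ((p.2.choose p.1 : ℝ) * z ^ (p.2 + 1)) := by
  have hz : |z| < 1 := by rwa [abs_of_nonneg hz0]
  have hw : 0 ≤ z / (1 - z) := div_nonneg hz0 (sub_nonneg.2 hz1.le)
  have hrow (j : ℕ) : HasSum (fun n : ℕ => ‖r j * ((n.choose j : ℝ) * z ^ (n + 1))‖)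
      ‖r j * (z / (1 - z)) ^ (j + 1)‖ := by
    simp_rw [norm_mul (r j)]
    rw [Real.norm_of_nonneg (pow_nonneg hw _)]
    convert! (hasSum_choose_mul_pow j hz).mul_left ‖r j‖ using 3 with n
    exact Real.norm_of_nonneg (by positivity)
  refine Summable.of_norm ((summable_prod_of_nonneg fun p => norm_nonneg _).2
    ⟨fun j => (hrow j).summable, ?_⟩)
  simpa only [(hrow _).tsum_eq] using hr.norm

theorem hasSum_sum_choose_mul_pow {V : ℝ} (hz0 : 0 ≤ z) (hz1 : z < 1)
    (hV : HasSum (fun j => r j * (z / (1 - z)) ^ (j + 1)) V) :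
    HasSum (fun n : ℕ => (∑ j ∈ range (n + 1), (n.choose j : ℝ) * r j) * z ^ (n + 1)) V := by
  have hz : |z| < 1 := by rwa [abs_of_nonneg hz0]
  have hdouble := (summable_mul_choose_mul_pow hz0 hz1 hV.summable).hasSum
  rw [(hdouble.prod_fiberwise fun j => (hasSum_choose_mul_pow j hz).mul_left (r j)).unique hV]
    at hdouble
  refine ((Equiv.prodComm ℕ ℕ).hasSum_iff.2 hdouble).prod_fiberwise fun n => ?_
  rw [Finset.sum_mul]
  simp_rw [mul_comm _ (r _), mul_assoc]
  refine hasSum_sum_of_ne_finset_zero fun j hj => ?_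
  simp [Nat.choose_eq_zero_of_lt (show n < j by simpa using hj)]

end Reexpansion

section Coefficients

theorem one_add_mul_sum_alternating_mul_pow {R : Type*} [CommRing R] (τ : ℕ → R) (w : R) (k : ℕ) :
    (1 + w) * ∑ m ∈ range k, (-1) ^ m * (∑ i ∈ range (m + 1), (-1) ^ i * τ i) * w ^ m =
      ∑ m ∈ range k, τ m * w ^ m - (-1) ^ k * (∑ i ∈ range k, (-1) ^ i * τ i) * w ^ k := by
  induction k with
  | zero => simp
  | succ k ih =>
    have hsign : (-1 : R) ^ k * (-1) ^ k = 1 := pow_mul_pow_eq_one k (by norm_num)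
    rw [Finset.sum_range_succ, mul_add, ih, Finset.sum_range_succ _ k, Finset.sum_range_succ _ k]
    linear_combination (τ k * w ^ k) * hsign

theorem aCoef_sub (k m : ℕ) (hm : m < k) :
    aCoef k (k - 1 - m) =
      (-1) ^ m * ∑ i ∈ range (m + 1), (-1) ^ i * (lam k i / i.factorial) := by
  rw [aCoef, Nat.sub_sub_self (Nat.le_sub_one_of_lt hm)]
  simp_rw [mul_div_assoc]

theorem pow_mul_sum_aCoef_div_pow (k : ℕ) {w : ℝ} (hw : w ≠ 0) :
    w ^ k * ∑ j ∈ range k, aCoef k j / w ^ (j + 1) =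
      ∑ m ∈ range k,
        (-1) ^ m * (∑ i ∈ range (m + 1), (-1) ^ i * (lam k i / i.factorial)) * w ^ m := by
  rw [Finset.mul_sum, ← Finset.sum_range_reflect]
  refine Finset.sum_congr rfl fun m hm => ?_
  have hmk : m < k := mem_range.1 hm
  rw [← aCoef_sub k m hmk, mul_div_left_comm]
  congr 1
  rw [div_eq_iff (pow_ne_zero _ hw), ← pow_add]
  congr 1
  omega

theorem ell_zero (k : ℕ) :
    ell k 0 = lam k k / k.factorial +
      (-1) ^ k * ∑ i ∈ range k, (-1) ^ i * (lam k i / i.factorial) := by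
  have hsign : (-1 : ℝ) ^ k * (-1) ^ k = 1 := pow_mul_pow_eq_one k (by norm_num)
  rw [ell, if_neg (by norm_num), add_zero, Int.toNat_natCast, Finset.sum_range_succ]
  simp only [neg_zero, Int.toNat_zero, Nat.choose_zero_right, Nat.cast_one, one_mul, mul_div_assoc]
  linear_combination (lam k k / k.factorial) * hsign

theorem neg_one_pow_mul_ell_succ (k n : ℕ) :
    (-1) ^ (n + 1) * ell k ((n + 1 : ℕ) : ℤ) =
      ∑ j ∈ range (n + 1), (n.choose j : ℝ) * (lam k (j + 1 + k) / (j + 1 + k).factorial) := by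
  rw [ell, if_pos (by push_cast; omega), Int.toNat_natCast, ← mul_assoc, ← mul_pow, neg_one_mul,
    neg_neg, one_pow, one_mul, ← Finset.Ico_add_one_right_eq_Icc, Finset.sum_Ico_eq_sum_range]
  simp_rw [Nat.add_sub_cancel, add_comm 1, Nat.add_sub_cancel, mul_div_assoc]

end Coefficients

section Mellin

theorem neg_one_pow_mul_sq {R : Type*} [CommRing R] (n : ℕ) (a : R) :
    ((-1) ^ n * a) ^ 2 = a ^ 2 := by
  rw [mul_pow, pow_right_comm, neg_one_sq, one_pow, one_mul]

variable (k : ℕ) {s : ℝ}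

theorem Deltak_div_mul_rpow_neg (s : ℝ) {x : ℝ} (hx : 0 < x) :
    Deltak k x / x * x ^ (-s) =
      (∑ n ∈ Icc 1 ⌊x⌋₊, (dk k n : ℝ)) * x ^ (-(s + 1)) -
        (∑ j ∈ range k, aCoef k j / j.factorial * Real.log x ^ j) * x ^ (-s) := by
  rw [Deltak, ← rpow_neg_mul_rpow_neg hx, Real.rpow_neg_one]
  field_simp

theorem integrableOn_Deltak_div_mul_rpow_neg (hs : 1 < s) :
    IntegrableOn (fun x : ℝ => Deltak k x / x * x ^ (-s)) (Set.Ioi 1) :=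
  ((integrableOn_sum_dk_mul_rpow k hs).sub
    (integrableOn_sum_log_pow_mul_rpow_neg k _ hs)).congr_fun
      (fun _ hx => (Deltak_div_mul_rpow_neg k s (zero_lt_one.trans hx)).symm) measurableSet_Ioi

theorem mul_integral_Deltak_div_mul_rpow_neg (hs : 1 < s) :
    s * ∫ x in Set.Ioi (1 : ℝ), Deltak k x / x * x ^ (-s) =
      (riemannZeta s ^ k).re - s * ∑ j ∈ range k, aCoef k j / (s - 1) ^ (j + 1) := by
  rw [setIntegral_congr_fun measurableSet_Ioi fun x hx =>
    Deltak_div_mul_rpow_neg k s (zero_lt_one.trans hx),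
    integral_sub (integrableOn_sum_dk_mul_rpow k hs)
      (integrableOn_sum_log_pow_mul_rpow_neg k _ hs), mul_sub,
    mul_integral_sum_dk_mul_rpow k hs, integral_sum_log_pow_mul_rpow_neg _ _ hs]
  congr 2
  refine Finset.sum_congr rfl fun j _ => ?_
  field_simp

theorem hasSum_lam_mul_pow_mellin (hs : 1 < s) :
    HasSum (fun j => lam k (j + 1 + k) / (j + 1 + k).factorial * (s - 1) ^ (j + 1))
      (s * (∫ x in Set.Ioi (1 : ℝ), Deltak k x / x * x ^ (-s)) - ell k 0) := by
  have hw : s - 1 ≠ 0 := (sub_pos.2 hs).ne'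
  have hcoef := one_add_mul_sum_alternating_mul_pow (fun i => lam k i / i.factorial) (s - 1) k
  rw [← pow_mul_sum_aCoef_div_pow k hw, add_sub_cancel] at hcoef
  have htail := (hasSum_nat_add_iff' (k + 1)).2 (hasSum_lam_mul_pow k hs.ne')
  convert! htail.div_const ((s - 1) ^ k) using 1
  · funext j
    rw [eq_div_iff (pow_ne_zero k hw), mul_assoc, ← pow_add, add_right_comm, add_assoc j]
  · rw [eq_div_iff (pow_ne_zero k hw), mul_integral_Deltak_div_mul_rpow_neg k hs, ell_zero,
      Finset.sum_range_succ]
    linear_combination -hcoef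

theorem hasSum_ell_mul_one_sub_inv_pow (hs : 1 < s) :
    HasSum (fun n : ℕ => (-1) ^ n * ell k n * (1 - s⁻¹) ^ n)
      (s * ∫ x in Set.Ioi (1 : ℝ), Deltak k x / x * x ^ (-s)) := by
  have hs0 : 0 < s := zero_lt_one.trans hs
  have hw : (1 - s⁻¹) / (1 - (1 - s⁻¹)) = s - 1 := by
    field_simp
    ring
  have hmellin := hasSum_lam_mul_pow_mellin k hs
  simp_rw [← hw] at hmellin
  rw [← hasSum_nat_add_iff' 1]
  convert! hasSum_sum_choose_mul_pow (sub_nonneg.2 (inv_le_one_of_one_le₀ hs.le))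
    (sub_lt_self 1 (inv_pos.2 hs0)) hmellin using 1
  · simp_rw [neg_one_pow_mul_ell_succ]
  · rw [Finset.sum_range_one, pow_zero, pow_zero, one_mul, mul_one, Nat.cast_zero]

theorem memLp_Deltak_div_iff :
    MemLp (fun x => Deltak k x / x) 2 volumeIoiOne ↔
      IntegrableOn (fun x : ℝ => Deltak k x ^ 2 / x ^ 2) (Set.Ioi 1) := by
  have hmeas : Measurable fun x => Deltak k x / x :=
    ((measurable_sum_Icc_floor _).sub (by fun_prop)).div measurable_id
  simp_rw [memLp_two_iff_integrable_sq hmeas.aestronglyMeasurable, div_pow, IntegrableOn]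

theorem hasSum_ell_sq
    (h : IntegrableOn (fun x : ℝ => Deltak k x ^ 2 / x ^ 2) (Set.Ioi 1)) :
    HasSum (fun n : ℕ => ell k n ^ 2) (∫ x in Set.Ioi (1 : ℝ), Deltak k x ^ 2 / x ^ 2) := by
  have hsq := hasSum_sq_of_forall_hasSum_mul_one_sub_inv_pow ((memLp_Deltak_div_iff k).2 h)
    fun _ => hasSum_ell_mul_one_sub_inv_pow k
  simpa only [neg_one_pow_mul_sq, div_pow] using hsq

theorem integrableOn_Deltak_sq_div_sq (h : Summable fun n : ℕ => ell k n ^ 2) :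
    IntegrableOn (fun x : ℝ => Deltak k x ^ 2 / x ^ 2) (Set.Ioi 1) := by
  refine (memLp_Deltak_div_iff k).1 (memLp_of_forall_hasSum_mul_one_sub_inv_pow
    (fun _ => integrableOn_Deltak_div_mul_rpow_neg k)
    (fun _ => hasSum_ell_mul_one_sub_inv_pow k) ?_)
  simpa only [neg_one_pow_mul_sq] using h

end Mellin

theorem stmt12 (k : ℕ) (hk : 0 < k) :
    (IntegrableOn (fun x : ℝ => (Deltak k x) ^ 2 / x ^ 2) (Set.Ioi 1) ↔
      Summable fun n : ℕ => (ell k n) ^ 2) ∧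
    (IntegrableOn (fun x : ℝ => (Deltak k x) ^ 2 / x ^ 2) (Set.Ioi 1) →
      ∫ x in Set.Ioi (1 : ℝ), (Deltak k x) ^ 2 / x ^ 2 = ∑' n : ℕ, (ell k n) ^ 2) :=
  ⟨⟨fun h => (hasSum_ell_sq k h).summable, integrableOn_Deltak_sq_div_sq k⟩,
    fun h => (hasSum_ell_sq k h).tsum_eq.symm⟩
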